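/- Assume in addition that the pair (W₀Z₀, W₁Z₁) is exchangeable, i.e. (W₀Z₀, W₁Z₁) and (W₁Z₁, W₀Z₀) have the same joint distribution, and set X₀ = W₀Z₀ and X₁ = W₁Z₁. Then there exists ε > 0 such that for every q ∈ [0,1], E(X₀^q · 1_{X₀ ≤ X₁}) ≥ ε · E(X₀^q) (with the convention 0^0 = 1). -/

import Mathlib

open MeasureTheory ProbabilityTheory Filter

/-- `I_ν = {q : ∫_{|x|≥1} e^{qx} ν(dx) < ∞}`. -/
noncomputable def Inu (ν : Measure ℝ) : Set ℝ :=
  {q : ℝ | ∫⁻ x in {x : ℝ | 1 ≤ |x|}, ENNReal.ofReal (Real.exp (q * x)) ∂ν < ⊤}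

/-- The normalizing drift `a = −σ²/2 − ∫ (e^x − 1 − x 1_{|x|≤1}) ν(dx)`. -/
noncomputable def levyA (σ : ℝ) (ν : Measure ℝ) : ℝ :=
  -σ ^ 2 / 2 - ∫ x, (Real.exp x - 1 - if |x| ≤ 1 then x else 0) ∂ν

/-- `ψ̃(q) = a q + σ² q²/2 + ∫ (e^{qx} − 1 − q x 1_{|x|≤1}) ν(dx)`. -/
noncomputable def psiT (σ : ℝ) (ν : Measure ℝ) (q : ℝ) : ℝ :=
  levyA σ ν * q + σ ^ 2 * q ^ 2 / 2 +
    ∫ x, (Real.exp (q * x) - 1 - q * (if |x| ≤ 1 then x else 0)) ∂ν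

/-- `φ(q) = ψ̃(q) − (q − 1)`. -/
noncomputable def phiF (σ : ℝ) (ν : Measure ℝ) (q : ℝ) : ℝ := psiT σ ν q - (q - 1)

/-! The moment hypothesis forces `Wᵢ > 0` almost surely: as `q ↓ 0`, `E(Wᵢ^q)` tends to `P(Wᵢ > 0)`
while `2 ^ ψ̃(q)` tends to `2 ^ ψ̃(0) = 1`. Hence `{Xᵢ > 0}` and `{Zᵢ > 0}` agree up to a null set,
so `{Xᵢ > 0}` has the probability of `{Z > 0}`; being contained in it (as `Xᵢ ≤ 2Z`), it is equal to
it up to a null set. So `X₀` and `X₁` are simultaneously positive with positive probability, and by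
exchangeability `0 < X₀ ≤ X₁` has positive probability. Since `min 1 x ≤ x ^ q ≤ max 1 x` for
`q ∈ [0,1]`, the constant `ε = E(min(1, X₀) 1_{X₀ ≤ X₁}) / E(max(1, X₀))` works for all `q`
at once. -/

section RealPowers

variable {q x : ℝ}

lemma min_one_le_rpow (hq : q ∈ Set.Icc (0 : ℝ) 1) (hx : 0 ≤ x) : min 1 x ≤ x ^ q := by
  rcases le_total x 1 with h | h
  · exact (min_le_right 1 x).trans (Real.self_le_rpow_of_le_one hx h hq.2)
  · exact (min_le_left 1 x).trans (Real.one_le_rpow h hq.1)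

lemma rpow_le_max_one (hq : q ∈ Set.Icc (0 : ℝ) 1) (hx : 0 ≤ x) : x ^ q ≤ max 1 x := by
  rcases le_total x 1 with h | h
  · exact (Real.rpow_le_one hx h hq.1).trans (le_max_left 1 x)
  · exact (Real.rpow_le_self_of_one_le h hq.2).trans (le_max_right 1 x)

lemma tendsto_rpow_nhdsGT_zero (hx : 0 ≤ x) :
    Tendsto (fun r : ℝ => x ^ r) (nhdsWithin 0 (Set.Ioi 0)) (nhds (if 0 < x then 1 else 0)) := by
  split_ifs with hpos
  · simpa using (Real.continuousAt_const_rpow (b := 0) hpos.ne').tendsto.mono_left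
      nhdsWithin_le_nhds
  · obtain rfl : x = 0 := le_antisymm (not_lt.1 hpos) hx
    refine tendsto_const_nhds.congr' ?_
    filter_upwards [self_mem_nhdsWithin] with r hr
    exact (Real.zero_rpow (ne_of_gt hr)).symm

end RealPowers

section LevyExponent

variable {σ : ℝ} {ν : Measure ℝ}

lemma abs_exp_mul_sub_one_sub_le {q : ℝ} (hq : q ∈ Set.Icc (0 : ℝ) 1) (x : ℝ) :
    |Real.exp (q * x) - 1 - q * (if |x| ≤ 1 then x else 0)| ≤
      min 1 (x ^ 2) + Set.indicator {x : ℝ | 1 ≤ |x|} Real.exp x := by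
  by_cases hx : |x| ≤ 1
  · have hqx : |q * x| ≤ |x| := by
      rw [abs_mul, abs_of_nonneg hq.1]
      exact mul_le_of_le_one_left (abs_nonneg x) hq.2
    calc |Real.exp (q * x) - 1 - q * (if |x| ≤ 1 then x else 0)|
        = |Real.exp (q * x) - 1 - q * x| := by rw [if_pos hx]
      _ ≤ (q * x) ^ 2 := Real.abs_exp_sub_one_sub_id_le (hqx.trans hx)
      _ ≤ x ^ 2 := sq_le_sq.2 hqx
      _ = min 1 (x ^ 2) := (min_eq_right ((sq_le_one_iff_abs_le_one x).2 hx)).symm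
      _ ≤ _ := le_add_of_nonneg_right (Set.indicator_nonneg (fun y _ => (Real.exp_pos y).le) x)
  · have hx' : 1 ≤ |x| := (not_le.1 hx).le
    have hexp : Real.exp (q * x) ≤ max 1 (Real.exp x) := by
      rw [mul_comm, Real.exp_mul]
      exact rpow_le_max_one hq (Real.exp_pos x).le
    have hmax : max 1 (Real.exp x) ≤ 1 + Real.exp x :=
      max_le_add_of_nonneg zero_le_one (Real.exp_pos x).le
    rw [if_neg hx, min_eq_left ((one_le_sq_iff_one_le_abs x).2 hx'),
      Set.indicator_of_mem (show x ∈ {x : ℝ | 1 ≤ |x|} from hx'), abs_le]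
    constructor <;> linarith [Real.exp_pos (q * x), Real.exp_pos x]

lemma integrable_min_one_sq_add_indicator_exp
    (hν : ∫⁻ x, ENNReal.ofReal (min 1 (x ^ 2)) ∂ν < ⊤) (h1 : (1 : ℝ) ∈ Inu ν) :
    Integrable (fun x => min 1 (x ^ 2) + Set.indicator {x : ℝ | 1 ≤ |x|} Real.exp x) ν := by
  have hsmall : Integrable (fun x : ℝ => min 1 (x ^ 2)) ν :=
    ⟨by fun_prop, (hasFiniteIntegral_iff_ofReal (ae_of_all _ fun x => by positivity)).2 hν⟩
  have hlarge : IntegrableOn Real.exp {x : ℝ | 1 ≤ |x|} ν :=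
    ⟨by fun_prop, (hasFiniteIntegral_iff_ofReal (ae_of_all _ fun x => (Real.exp_pos x).le)).2
      (by simpa [Inu] using h1)⟩
  exact hsmall.add
    (hlarge.integrable_indicator (measurableSet_le measurable_const measurable_id.abs))

lemma continuousOn_psiT (hν : ∫⁻ x, ENNReal.ofReal (min 1 (x ^ 2)) ∂ν < ⊤)
    (h1 : (1 : ℝ) ∈ Inu ν) : ContinuousOn (psiT σ ν) (Set.Icc 0 1) := by
  have htrunc : Measurable fun x : ℝ => if |x| ≤ 1 then x else 0 :=
    Measurable.ite (measurableSet_le measurable_id.abs measurable_const) measurable_id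
      measurable_const
  refine ContinuousOn.add (by fun_prop) (continuousOn_of_dominated (fun q _ => ?_)
    (fun q hq => ae_of_all _ (abs_exp_mul_sub_one_sub_le hq))
    (integrable_min_one_sq_add_indicator_exp hν h1) (ae_of_all _ fun x => ?_))
  · exact Measurable.aestronglyMeasurable (by fun_prop)
  · fun_prop

lemma psiT_zero : psiT σ ν 0 = 0 := by simp [psiT]

lemma tendsto_psiT_nhdsGT_zero (hν : ∫⁻ x, ENNReal.ofReal (min 1 (x ^ 2)) ∂ν < ⊤)
    (h1 : (1 : ℝ) ∈ Inu ν) :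
    Tendsto (psiT σ ν) (nhdsWithin 0 (Set.Ioi 0)) (nhds 0) := by
  have h := continuousOn_psiT (σ := σ) hν h1 0 (Set.left_mem_Icc.2 zero_le_one)
  rw [ContinuousWithinAt, psiT_zero] at h
  rw [← nhdsWithin_Ioc_eq_nhdsGT zero_lt_one]
  exact h.mono_left (nhdsWithin_mono 0 Set.Ioc_subset_Icc_self)

end LevyExponent

section Measure

variable {Ω : Type*} [MeasurableSpace Ω] {μ : Measure Ω} {X Y Z W : Ω → ℝ}

lemma tendsto_lintegral_rpow_nhdsGT_zero [IsFiniteMeasure μ] (hW : Integrable W μ)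
    (hW0 : 0 ≤ᵐ[μ] W) :
    Tendsto (fun q : ℝ => ∫⁻ ω, ENNReal.ofReal (W ω ^ q) ∂μ) (nhdsWithin 0 (Set.Ioi 0))
      (nhds (μ {ω | 0 < W ω})) := by
  have hlim : ∫⁻ ω, ENNReal.ofReal (if 0 < W ω then 1 else 0) ∂μ = μ {ω | 0 < W ω} := by
    rw [← lintegral_indicator_one₀ (nullMeasurableSet_lt aemeasurable_const hW.aemeasurable)]
    exact lintegral_congr fun ω => by by_cases h : 0 < W ω <;> simp [h]
  rw [← hlim]
  refine tendsto_lintegral_filter_of_dominated_convergence'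
    (fun ω => ENNReal.ofReal (max 1 (W ω))) (.of_forall fun q => ?_) ?_
    ((integrable_const 1).sup hW).lintegral_lt_top.ne ?_
  · exact (hW.aemeasurable.pow_const q).ennreal_ofReal
  · filter_upwards [Ioc_mem_nhdsGT zero_lt_one] with q hq
    filter_upwards [hW0] with ω hω
    exact ENNReal.ofReal_le_ofReal (rpow_le_max_one (Set.Ioc_subset_Icc_self hq) hω)
  · filter_upwards [hW0] with ω hω
    exact ENNReal.tendsto_ofReal (tendsto_rpow_nhdsGT_zero hω)

lemma ae_pos_of_lintegral_rpow_eq_rpow_psiT [IsProbabilityMeasure μ] {σ b : ℝ} {ν : Measure ℝ}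
    (hb : b ≠ 0) (hν : ∫⁻ x, ENNReal.ofReal (min 1 (x ^ 2)) ∂ν < ⊤) (h1 : (1 : ℝ) ∈ Inu ν)
    (hW : AEMeasurable W μ) (hW0 : 0 ≤ᵐ[μ] W)
    (hmom : ∀ q ∈ Set.Ioc (0 : ℝ) 1,
      ∫⁻ ω, ENNReal.ofReal (W ω ^ q) ∂μ = ENNReal.ofReal (b ^ psiT σ ν q)) :
    ∀ᵐ ω ∂μ, 0 < W ω := by
  have hWint : Integrable W μ := by
    refine ⟨hW.aestronglyMeasurable, (hasFiniteIntegral_iff_ofReal hW0).2 ?_⟩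
    simpa using (hmom 1 (Set.right_mem_Ioc.2 zero_lt_one)).trans_lt ENNReal.ofReal_lt_top
  have hone : Tendsto (fun q => ENNReal.ofReal (b ^ psiT σ ν q)) (nhdsWithin 0 (Set.Ioi 0))
      (nhds 1) := by
    simpa using ENNReal.tendsto_ofReal
      (tendsto_const_nhds.rpow (tendsto_psiT_nhdsGT_zero hν h1) (.inl hb))
  have hprob : μ {ω | 0 < W ω} = 1 := by
    refine tendsto_nhds_unique (tendsto_lintegral_rpow_nhdsGT_zero hWint hW0) (hone.congr' ?_)
    filter_upwards [Ioc_mem_nhdsGT zero_lt_one] with q hq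
    exact (hmom q hq).symm
  exact (prob_compl_eq_zero_iff₀ (nullMeasurableSet_lt aemeasurable_const hW)).2 hprob

lemma integrable_rpow_of_mem_Icc [IsFiniteMeasure μ] (hX : Integrable X μ) (hX0 : 0 ≤ᵐ[μ] X)
    {q : ℝ} (hq : q ∈ Set.Icc (0 : ℝ) 1) : Integrable (fun ω => X ω ^ q) μ := by
  refine ((integrable_const 1).sup hX).mono'
    (hX.aemeasurable.pow_const q).aestronglyMeasurable ?_
  filter_upwards [hX0] with ω hω
  exact (Real.norm_of_nonneg (Real.rpow_nonneg hω q)).trans_le (rpow_le_max_one hq hω)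

lemma exists_pos_mul_integral_rpow_le_setIntegral_rpow [IsFiniteMeasure μ] (hX : Integrable X μ)
    (hX0 : 0 ≤ᵐ[μ] X) {s : Set Ω} (hs : μ ({ω | 0 < X ω} ∩ s) ≠ 0) :
    ∃ ε > (0 : ℝ), ∀ q ∈ Set.Icc (0 : ℝ) 1,
      ε * ∫ ω, X ω ^ q ∂μ ≤ ∫ ω in s, X ω ^ q ∂μ := by
  have hmin : Integrable (fun ω => min 1 (X ω)) μ := (integrable_const 1).inf hX
  have hmax : Integrable (fun ω => max 1 (X ω)) μ := (integrable_const 1).sup hX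
  have hmin0 : 0 ≤ᵐ[μ] fun ω => min 1 (X ω) := hX0.mono fun ω => le_min zero_le_one
  have hrpow : ∀ q ∈ Set.Icc (0 : ℝ) 1, Integrable (fun ω => X ω ^ q) μ :=
    fun q hq => integrable_rpow_of_mem_Icc hX hX0 hq
  have hA : 0 < ∫ ω in s, min 1 (X ω) ∂μ := by
    rw [integral_pos_iff_support_of_nonneg_ae (ae_restrict_of_ae hmin0) hmin.integrableOn]
    refine (pos_iff_ne_zero.2 hs).trans_le ((Measure.le_restrict_apply _ _).trans'
      (measure_mono ?_))
    exact Set.inter_subset_inter_left s fun ω hω => (lt_min zero_lt_one hω).ne'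
  have hB : 0 < ∫ ω, max 1 (X ω) ∂μ :=
    calc 0 < ∫ ω in s, min 1 (X ω) ∂μ := hA
      _ ≤ ∫ ω, min 1 (X ω) ∂μ := setIntegral_le_integral hmin hmin0
      _ ≤ ∫ ω, max 1 (X ω) ∂μ := integral_mono hmin hmax fun ω => min_le_max
  refine ⟨_, div_pos hA hB, fun q hq => ?_⟩
  calc (∫ ω in s, min 1 (X ω) ∂μ) / (∫ ω, max 1 (X ω) ∂μ) * ∫ ω, X ω ^ q ∂μ
      ≤ (∫ ω in s, min 1 (X ω) ∂μ) / (∫ ω, max 1 (X ω) ∂μ) * ∫ ω, max 1 (X ω) ∂μ :=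
        mul_le_mul_of_nonneg_left (integral_mono_ae (hrpow q hq) hmax
          (hX0.mono fun ω => rpow_le_max_one hq)) (div_pos hA hB).le
    _ = ∫ ω in s, min 1 (X ω) ∂μ := div_mul_cancel₀ _ hB.ne'
    _ ≤ ∫ ω in s, X ω ^ q ∂μ := integral_mono_ae hmin.integrableOn (hrpow q hq).integrableOn
        (ae_restrict_of_ae (hX0.mono fun ω => min_one_le_rpow hq))

lemma measure_pos_inter_pos_le_of_identDistrib_swap
    (hXY : IdentDistrib (fun ω => (X ω, Y ω)) (fun ω => (Y ω, X ω)) μ μ) :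
    μ ({ω | 0 < X ω} ∩ {ω | 0 < Y ω}) ≤ 2 * μ ({ω | 0 < X ω} ∩ {ω | X ω ≤ Y ω}) := by
  have hswap : μ ({ω | 0 < X ω} ∩ {ω | X ω ≤ Y ω}) = μ ({ω | 0 < Y ω} ∩ {ω | Y ω ≤ X ω}) :=
    hXY.measure_mem_eq ((measurableSet_lt measurable_const measurable_fst).inter
      (measurableSet_le measurable_fst measurable_snd))
  calc μ ({ω | 0 < X ω} ∩ {ω | 0 < Y ω})
      ≤ μ (({ω | 0 < X ω} ∩ {ω | X ω ≤ Y ω}) ∪ ({ω | 0 < Y ω} ∩ {ω | Y ω ≤ X ω})) :=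
        measure_mono fun ω ⟨hX, hY⟩ => (le_total (X ω) (Y ω)).imp (⟨hX, ·⟩) (⟨hY, ·⟩)
    _ ≤ _ := measure_union_le _ _
    _ = 2 * μ ({ω | 0 < X ω} ∩ {ω | X ω ≤ Y ω}) := by rw [← hswap, two_mul]

lemma setOf_pos_mul_ae_eq_setOf_pos [IsFiniteMeasure μ] {c : ℝ} (hW : ∀ᵐ ω ∂μ, 0 < W ω)
    (hZ0 : 0 ≤ᵐ[μ] Z) (hd : IdentDistrib Y Z μ μ) (hle : ∀ᵐ ω ∂μ, W ω * Y ω ≤ c * Z ω) :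
    {ω | 0 < W ω * Y ω} =ᵐ[μ] {ω | 0 < Z ω} := by
  have hWY : {ω | 0 < W ω * Y ω} =ᵐ[μ] {ω | 0 < Y ω} := by
    filter_upwards [hW] with ω hω
    exact propext (mul_pos_iff_of_pos_left hω)
  have hsub : {ω | 0 < W ω * Y ω} ≤ᵐ[μ] {ω | 0 < Z ω} := by
    filter_upwards [hZ0, hle] with ω hω hωle hpos
    exact hω.lt_of_ne' (right_ne_zero_of_mul (hpos.trans_le hωle).ne')
  refine ae_eq_of_ae_subset_of_measure_ge hsub ?_
    ((nullMeasurableSet_lt aemeasurable_const hd.aemeasurable_fst).congr hWY.symm)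
    (measure_ne_top μ _)
  rw [measure_congr hWY]
  exact (hd.measure_mem_eq measurableSet_Ioi).ge

end Measure

theorem stmt_4_general {Ω : Type*} [MeasurableSpace Ω] {P : Measure Ω} [IsFiniteMeasure P] {c : ℝ}
    {W Z' : Fin 2 → Ω → ℝ} {Z : Ω → ℝ} (hW : ∀ i, ∀ᵐ ω ∂P, 0 < W i ω)
    (hZ'0 : ∀ i, 0 ≤ᵐ[P] Z' i) (hZ0 : 0 ≤ᵐ[P] Z) (hZd : ∀ i, IdentDistrib (Z' i) Z P P)
    (hZint : Integrable Z P) (hZpos : 0 < ∫ ω, Z ω ∂P)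
    (hEq : ∀ᵐ ω ∂P, c * Z ω = W 0 ω * Z' 0 ω + W 1 ω * Z' 1 ω)
    (hex : IdentDistrib (fun ω => (W 0 ω * Z' 0 ω, W 1 ω * Z' 1 ω))
      (fun ω => (W 1 ω * Z' 1 ω, W 0 ω * Z' 0 ω)) P P) :
    ∃ ε > (0 : ℝ), ∀ q ∈ Set.Icc (0 : ℝ) 1,
      ε * ∫ ω, (W 0 ω * Z' 0 ω) ^ q ∂P ≤
        ∫ ω in {ω | W 0 ω * Z' 0 ω ≤ W 1 ω * Z' 1 ω}, (W 0 ω * Z' 0 ω) ^ q ∂P := by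
  have hX0 : ∀ i, 0 ≤ᵐ[P] fun ω => W i ω * Z' i ω := fun i => by
    filter_upwards [hW i, hZ'0 i] with ω hWω hZω using mul_nonneg hWω.le hZω
  have hle0 : ∀ᵐ ω ∂P, W 0 ω * Z' 0 ω ≤ c * Z ω := by
    filter_upwards [hEq, hX0 1] with ω h h1 using h ▸ le_add_of_nonneg_right h1
  have hle1 : ∀ᵐ ω ∂P, W 1 ω * Z' 1 ω ≤ c * Z ω := by
    filter_upwards [hEq, hX0 0] with ω h h0 using h ▸ le_add_of_nonneg_left h0
  have hXint : Integrable (fun ω => W 0 ω * Z' 0 ω) P := by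
    refine (hZint.const_mul c).mono' hex.aemeasurable_fst.fst.aestronglyMeasurable ?_
    filter_upwards [hX0 0, hle0] with ω h0 hle using (Real.norm_of_nonneg h0).trans_le hle
  have hboth : ({ω | 0 < W 0 ω * Z' 0 ω} ∩ {ω | 0 < W 1 ω * Z' 1 ω} : Set Ω) =ᵐ[P]
      {ω | 0 < Z ω} := by
    simpa using (setOf_pos_mul_ae_eq_setOf_pos (hW 0) hZ0 (hZd 0) hle0).inter
      (setOf_pos_mul_ae_eq_setOf_pos (hW 1) hZ0 (hZd 1) hle1)
  refine exists_pos_mul_integral_rpow_le_setIntegral_rpow hXint (hX0 0) fun hnull => ?_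
  have h := measure_pos_inter_pos_le_of_identDistrib_swap hex
  rw [hnull, mul_zero, measure_congr hboth, nonpos_iff_eq_zero,
    measure_eq_zero_iff_ae_notMem] at h
  exact hZpos.not_ge (integral_nonpos_of_ae (h.mono fun ω hω => not_lt.1 hω))

/-- If `2Z = W₀Z₀ + W₁Z₁` a.s., with `Z, Z₀, Z₁` identically distributed with positive finite
mean, `W_i` with moments `E(W_i^q) = 2^{ψ̃(q)}` and independent of `Z_i`, and
`(X₀, X₁) = (W₀Z₀, W₁Z₁)` exchangeable, then there is `ε > 0` such that for every `q ∈ [0,1]`,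
`E(X₀^q 1_{X₀ ≤ X₁}) ≥ ε E(X₀^q)` (real powers, with `0^0 = 1`). -/
theorem stmt_4
    {Ω : Type*} [MeasurableSpace Ω] (P : Measure Ω) [IsProbabilityMeasure P]
    (σ : ℝ) (ν : Measure ℝ)
    (hν0 : ν {0} = 0)
    (hν2 : ∫⁻ x, ENNReal.ofReal (min 1 (x ^ 2)) ∂ν < ⊤)
    (hnz : σ ≠ 0 ∨ ν ≠ 0)
    (hIν : Set.Icc (0 : ℝ) 1 ⊆ Inu ν)
    (W Z' : Fin 2 → Ω → ℝ) (Z : Ω → ℝ)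
    (hWm : ∀ i, Measurable (W i)) (hZ'm : ∀ i, Measurable (Z' i)) (hZm : Measurable Z)
    (hW0 : ∀ i ω, 0 ≤ W i ω) (hZ'0 : ∀ i ω, 0 ≤ Z' i ω) (hZ0 : ∀ ω, 0 ≤ Z ω)
    (hZd : ∀ i, P.map (Z' i) = P.map Z)
    (hZint : Integrable Z P) (hZpos : 0 < ∫ ω, Z ω ∂P)
    (hWmom : ∀ i, ∀ q : ℝ, 0 ≤ q →
      (q ∈ Inu ν →
        ∫⁻ ω, ENNReal.ofReal (W i ω ^ q) ∂P = ENNReal.ofReal ((2 : ℝ) ^ psiT σ ν q)) ∧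
      (q ∉ Inu ν → ∫⁻ ω, ENNReal.ofReal (W i ω ^ q) ∂P = ⊤))
    (hInd : ∀ i, IndepFun (W i) (Z' i) P)
    (hEq : ∀ᵐ ω ∂P, 2 * Z ω = W 0 ω * Z' 0 ω + W 1 ω * Z' 1 ω)
    (hex : P.map (fun ω => (W 0 ω * Z' 0 ω, W 1 ω * Z' 1 ω)) =
           P.map (fun ω => (W 1 ω * Z' 1 ω, W 0 ω * Z' 0 ω))) :
    ∃ ε > (0 : ℝ), ∀ q ∈ Set.Icc (0 : ℝ) 1,
      ε * ∫ ω, (W 0 ω * Z' 0 ω) ^ q ∂P ≤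
        ∫ ω in {ω | W 0 ω * Z' 0 ω ≤ W 1 ω * Z' 1 ω}, (W 0 ω * Z' 0 ω) ^ q ∂P := by
  have hW : ∀ i, ∀ᵐ ω ∂P, 0 < W i ω := fun i =>
    ae_pos_of_lintegral_rpow_eq_rpow_psiT two_ne_zero hν2
      (hIν (Set.right_mem_Icc.2 zero_le_one)) (hWm i).aemeasurable (ae_of_all P (hW0 i)) fun q hq =>
        (hWmom i q hq.1.le).1 (hIν (Set.Ioc_subset_Icc_self hq))
  exact stmt_4_general hW (fun i => ae_of_all P (hZ'0 i)) (ae_of_all P hZ0)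
    (fun i => ⟨(hZ'm i).aemeasurable, hZm.aemeasurable, hZd i⟩) hZint hZpos hEq
    ⟨by fun_prop, by fun_prop, hex⟩
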